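/- Let C be a Hermitian complex matrix indexed by Fin m × Fin n and let ρA ∈ Ω_m, ρB ∈ Ω_n. Then strong duality holds for quantum optimal transport: T_C(ρA, ρB) = sup { Re(trace(σA * ρA)) + Re(trace(σB * ρB)) : σA a Hermitian m×m matrix, σB a Hermitian n×n matrix, such that C − σA ⊗ 1_n − 1_m ⊗ σB is positive semidefinite }, where σA ⊗ 1_n and 1_m ⊗ σB are Kronecker products indexed by Fin m × Fin n. Moreover, if ρA and ρB are positive definite, then this supremum is attained: there exist Hermitian σA, σB with C − σA ⊗ 1_n − 1_m ⊗ σB positive semidefinite and T_C(ρA, ρB) = Re(trace(σA * ρA)) + Re(trace(σB * ρB)). -/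

import Mathlib

open Matrix ComplexOrder

/-- A density matrix: positive semidefinite with trace one. -/
def IsDensityMatrix {k : Type*} [Fintype k] [DecidableEq k] (ρ : Matrix k k ℂ) : Prop :=
  ρ.PosSemidef ∧ ρ.trace = 1

/-- Partial trace over the second factor. -/
noncomputable def trB {m n : ℕ} (R : Matrix (Fin m × Fin n) (Fin m × Fin n) ℂ) :
    Matrix (Fin m) (Fin m) ℂ :=
  Matrix.of fun i j => ∑ p, R (i, p) (j, p)

/-- Partial trace over the first factor. -/
noncomputable def trA {m n : ℕ} (R : Matrix (Fin m × Fin n) (Fin m × Fin n) ℂ) :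
    Matrix (Fin n) (Fin n) ℂ :=
  Matrix.of fun p q => ∑ i, R (i, p) (i, q)

/-- The set of quantum couplings of two density matrices. -/
def QCouplings {m n : ℕ} (ρA : Matrix (Fin m) (Fin m) ℂ) (ρB : Matrix (Fin n) (Fin n) ℂ) :
    Set (Matrix (Fin m × Fin n) (Fin m × Fin n) ℂ) :=
  {R | IsDensityMatrix R ∧ trB R = ρA ∧ trA R = ρB}

/-- The quantum optimal transport cost. -/
noncomputable def QOT {m n : ℕ} (C : Matrix (Fin m × Fin n) (Fin m × Fin n) ℂ)
    (ρA : Matrix (Fin m) (Fin m) ℂ) (ρB : Matrix (Fin n) (Fin n) ℂ) : ℝ :=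
  sInf ((fun R => ((C * R).trace).re) '' QCouplings ρA ρB)

/-- The SWAP matrix on `Fin n × Fin n`. -/
noncomputable def swapM (n : ℕ) : Matrix (Fin n × Fin n) (Fin n × Fin n) ℂ :=
  Matrix.of fun x y => if x.1 = y.2 ∧ x.2 = y.1 then 1 else 0

/-- The quantum cost matrix `C^Q = (1/2) (I - S)`. -/
noncomputable def CQ (n : ℕ) : Matrix (Fin n × Fin n) (Fin n × Fin n) ℂ :=
  (1 / 2 : ℂ) • (1 - swapM n)

/-- Kronecker product of square matrices indexed by `Fin m` and `Fin n`. -/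
noncomputable def kron {m n : ℕ} (A : Matrix (Fin m) (Fin m) ℂ)
    (B : Matrix (Fin n) (Fin n) ℂ) : Matrix (Fin m × Fin n) (Fin m × Fin n) ℂ :=
  Matrix.of fun x y => A x.1 y.1 * B x.2 y.2

open scoped MatrixOrder in
/-- A positive semidefinite complex matrix factors as `Bᴴ * B`. -/
lemma Matrix.PosSemidef.exists_eq_conjTranspose_mul_self {k : Type*} [Fintype k]
    {S : Matrix k k ℂ} (hS : S.PosSemidef) : ∃ B : Matrix k k ℂ, S = Bᴴ * B := by
  classical
  exact CStarAlgebra.nonneg_iff_eq_star_mul_self.mp hS.nonneg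

lemma Matrix.PosSemidef.re_trace_mul_nonneg {k : Type*} [Fintype k]
    {S R : Matrix k k ℂ} (hS : S.PosSemidef) (hR : R.PosSemidef) : 0 ≤ ((S * R).trace).re := by
  obtain ⟨B, rfl⟩ := hS.exists_eq_conjTranspose_mul_self
  rw [Matrix.mul_assoc, Matrix.trace_mul_comm]
  exact (Complex.nonneg_iff.mp (hR.mul_mul_conjTranspose_same B).trace_nonneg).1

/-- Positive semidefiniteness is tested by pairing with density matrices. -/
lemma Matrix.IsHermitian.posSemidef_of_re_trace_mul_nonneg {k : Type*} [Fintype k] [DecidableEq k]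
    {H : Matrix k k ℂ} (hH : H.IsHermitian)
    (h : ∀ R, IsDensityMatrix R → 0 ≤ ((H * R).trace).re) : H.PosSemidef := by
  refine .of_dotProduct_mulVec_nonneg hH fun x => ?_
  have him : (star x ⬝ᵥ H *ᵥ x).im = 0 := hH.im_star_dotProduct_mulVec_self x
  rw [Complex.nonneg_iff]
  refine ⟨?_, him.symm⟩
  by_cases hx : x = 0
  · simp [hx]
  have hP : (vecMulVec x (star x)).PosSemidef := posSemidef_vecMulVec_self_star x
  have ht : (vecMulVec x (star x)).trace = star x ⬝ᵥ x := by
    rw [trace_vecMulVec, dotProduct_comm]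
  have hpos : 0 < star x ⬝ᵥ x := dotProduct_star_self_pos_iff.mpr hx
  have hinv : 0 < (star x ⬝ᵥ x)⁻¹ := inv_pos.mpr hpos
  have hden : IsDensityMatrix ((star x ⬝ᵥ x)⁻¹ • vecMulVec x (star x)) :=
    ⟨hP.smul hinv.le, by rw [trace_smul, ht, smul_eq_mul, inv_mul_cancel₀ hpos.ne']⟩
  have key := h _ hden
  rw [Matrix.mul_smul, trace_smul, mul_vecMulVec, trace_vecMulVec, dotProduct_comm (H *ᵥ x),
    smul_eq_mul, Complex.mul_re, him] at key
  have hr : 0 < ((star x ⬝ᵥ x)⁻¹).re := (Complex.pos_iff.mp hinv).1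
  simp only [mul_zero, sub_zero] at key
  exact nonneg_of_mul_nonneg_right key hr

lemma Matrix.PosSemidef.norm_apply_le_re_trace {k : Type*} [Fintype k]
    {S : Matrix k k ℂ} (hS : S.PosSemidef) (i j : k) : ‖S i j‖ ≤ S.trace.re := by
  obtain ⟨B, rfl⟩ := hS.exists_eq_conjTranspose_mul_self
  have hdiag : ∀ l, ((Bᴴ * B) l l).re = ∑ q, ‖B q l‖ ^ 2 := fun l => by
    simp [Matrix.mul_apply, Complex.sq_norm, Complex.normSq_apply]
  have hle : ∀ l, ∑ q, ‖B q l‖ ^ 2 ≤ ((Bᴴ * B).trace).re := fun l => by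
    rw [Matrix.trace, Complex.re_sum]
    simp only [Matrix.diag_apply, hdiag]
    exact Finset.single_le_sum (f := fun l => ∑ q, ‖B q l‖ ^ 2)
      (fun l _ => Finset.sum_nonneg fun q _ => sq_nonneg _) (Finset.mem_univ l)
  calc ‖(Bᴴ * B) i j‖ ≤ ∑ q, ‖B q i‖ * ‖B q j‖ := by
        rw [Matrix.mul_apply]
        refine (norm_sum_le _ _).trans_eq ?_
        simp
    _ ≤ ∑ q, (‖B q i‖ ^ 2 + ‖B q j‖ ^ 2) / 2 :=
        Finset.sum_le_sum fun q _ => by nlinarith [sq_nonneg (‖B q i‖ - ‖B q j‖)]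
    _ = (∑ q, ‖B q i‖ ^ 2 + ∑ q, ‖B q j‖ ^ 2) / 2 := by
        rw [← Finset.sum_div, Finset.sum_add_distrib]
    _ ≤ ((Bᴴ * B).trace).re := by linarith [hle i, hle j]

lemma Matrix.isClosed_setOf_posSemidef {k : Type*} [Fintype k] :
    IsClosed {S : Matrix k k ℂ | S.PosSemidef} := by
  simp only [posSemidef_iff_dotProduct_mulVec, Matrix.IsHermitian, Complex.nonneg_iff,
    Set.ofPred_and, Set.ofPred_forall]
  refine (isClosed_eq (by fun_prop) continuous_id).inter
    (isClosed_iInter fun x => (isClosed_le continuous_const ?_).inter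
      (isClosed_eq continuous_const ?_))
  · exact Complex.continuous_re.comp
      (continuous_const.dotProduct (continuous_id.matrix_mulVec continuous_const))
  · exact Complex.continuous_im.comp
      (continuous_const.dotProduct (continuous_id.matrix_mulVec continuous_const))

lemma Matrix.isCompact_setOf_posSemidef_re_trace_le {k : Type*} [Fintype k] (M : ℝ) :
    IsCompact {S : Matrix k k ℂ | S.PosSemidef ∧ S.trace.re ≤ M} := by
  have hbox : IsCompact (Set.univ.pi fun _ => Set.univ.pi fun _ => Metric.closedBall 0 M :
      Set (k → k → ℂ)) :=
    isCompact_univ_pi fun _ => isCompact_univ_pi fun _ => isCompact_closedBall _ _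
  refine IsCompact.of_isClosed_subset (show IsCompact (X := Matrix k k ℂ) _ from hbox) ?_ ?_
  · exact isClosed_setOf_posSemidef.inter
      (isClosed_le (Complex.continuous_re.comp continuous_id.matrix_trace) continuous_const)
  · rintro S ⟨hS, hM⟩ i - j -
    simpa using (hS.norm_apply_le_re_trace i j).trans hM

/-- Sublevel sets of the pairing with a positive definite matrix are compact on the
positive semidefinite cone. -/
lemma Matrix.PosDef.isCompact_setOf_posSemidef_re_trace_mul_le {k : Type*} [Fintype k]
    [DecidableEq k] {R : Matrix k k ℂ} (hR : R.PosDef) (M : ℝ) :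
    IsCompact {S : Matrix k k ℂ | S.PosSemidef ∧ ((S * R).trace).re ≤ M} := by
  obtain ⟨D, rfl⟩ := hR.posSemidef.exists_eq_conjTranspose_mul_self
  have hD : IsUnit D.det := by
    have := (isUnit_iff_isUnit_det _).mp hR.isUnit
    rw [det_mul] at this
    exact isUnit_of_mul_isUnit_right this
  have hD' : IsUnit Dᴴ.det := by rw [det_conjTranspose]; exact hD.star
  have hcont : Continuous fun T : Matrix k k ℂ => D⁻¹ * T * (Dᴴ)⁻¹ :=
    (continuous_const.matrix_mul continuous_id).matrix_mul continuous_const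
  refine ((isCompact_setOf_posSemidef_re_trace_le M).image hcont).of_isClosed_subset ?_ ?_
  · exact isClosed_setOf_posSemidef.inter (isClosed_le (Complex.continuous_re.comp
      (continuous_id.matrix_mul continuous_const).matrix_trace) continuous_const)
  · rintro S ⟨hS, hM⟩
    refine ⟨D * S * Dᴴ, ⟨hS.mul_mul_conjTranspose_same D, ?_⟩, ?_⟩
    · rwa [Matrix.mul_assoc, trace_mul_comm, Matrix.mul_assoc]
    · change D⁻¹ * (D * S * Dᴴ) * (Dᴴ)⁻¹ = S
      rw [Matrix.mul_assoc D, nonsing_inv_mul_cancel_left _ _ hD,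
        mul_nonsing_inv_cancel_right _ _ hD']

lemma isCompact_setOf_isDensityMatrix {k : Type*} [Fintype k] [DecidableEq k] :
    IsCompact {R : Matrix k k ℂ | IsDensityMatrix R} := by
  refine (Matrix.isCompact_setOf_posSemidef_re_trace_le 1).of_isClosed_subset ?_ ?_
  · exact Matrix.isClosed_setOf_posSemidef.inter
      (isClosed_eq continuous_id.matrix_trace continuous_const)
  · rintro R ⟨hR, ht⟩
    exact ⟨hR, by simp [ht]⟩

lemma convex_setOf_isDensityMatrix {k : Type*} [Fintype k] [DecidableEq k] :
    Convex ℝ {R : Matrix k k ℂ | IsDensityMatrix R} := by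
  rintro R ⟨hR, hRt⟩ R' ⟨hR', hRt'⟩ a b ha hb hab
  refine ⟨(hR.smul ha).add (hR'.smul hb), ?_⟩
  rw [trace_add, trace_smul, trace_smul, hRt, hRt', ← add_smul, hab, one_smul]

/-- Every real-linear functional is represented on Hermitian matrices by the trace pairing
with a Hermitian matrix. -/
lemma exists_isHermitian_forall_eq_re_trace_mul {k : Type*} [Fintype k] [DecidableEq k]
    (f : Matrix k k ℂ →ₗ[ℝ] ℝ) :
    ∃ σ : Matrix k k ℂ, σ.IsHermitian ∧ ∀ X : Matrix k k ℂ, X.IsHermitian →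
      f X = ((σ * X).trace).re := by
  let τ : Matrix k k ℂ := Matrix.of fun j i =>
    ⟨f (Matrix.single i j 1), - f (Matrix.single i j Complex.I)⟩
  have hτ : ∀ X, f X = ((τ * X).trace).re := fun X => by
    have hsingle : ∀ i j, f (Matrix.single i j (X i j)) =
        (X i j).re * f (Matrix.single i j 1) + (X i j).im * f (Matrix.single i j Complex.I) := by
      intro i j
      rw [← smul_eq_mul, ← smul_eq_mul, ← map_smul, ← map_smul, ← map_add, smul_single, smul_single,
        ← single_add]
      congr 2
      simp
    conv_lhs => rw [matrix_eq_sum_single X]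
    simp only [map_sum, hsingle, Matrix.trace, Matrix.diag_apply, Matrix.mul_apply,
      Complex.re_sum]
    rw [Finset.sum_comm]
    refine Finset.sum_congr rfl fun j _ => Finset.sum_congr rfl fun i _ => ?_
    simp only [τ, Matrix.of_apply, Complex.mul_re]
    ring
  refine ⟨(2⁻¹ : ℝ) • (τ + τᴴ), ?_, fun X hX => ?_⟩
  · rw [Matrix.IsHermitian, conjTranspose_smul, conjTranspose_add, conjTranspose_conjTranspose,
      add_comm, star_trivial]
  · have hconj : ((τᴴ * X).trace).re = ((τ * X).trace).re := by
      conv_lhs => rw [← hX.eq, ← conjTranspose_mul, trace_conjTranspose, trace_mul_comm]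
      simp
    rw [smul_mul, trace_smul, add_mul, trace_add, Complex.smul_re, Complex.add_re, hconj, hτ,
      smul_eq_mul]
    ring

section Kronecker

variable {m n : ℕ}

lemma trace_kron_one_mul (σ : Matrix (Fin m) (Fin m) ℂ)
    (R : Matrix (Fin m × Fin n) (Fin m × Fin n) ℂ) :
    (kron σ 1 * R).trace = (σ * trB R).trace := by
  simp only [Matrix.trace, Matrix.diag_apply, Matrix.mul_apply, kron, trB, Matrix.of_apply,
    Fintype.sum_prod_type, Matrix.one_apply, mul_ite, mul_one, mul_zero, ite_mul, zero_mul,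
    Finset.sum_ite_eq, Finset.mem_univ, if_true, Finset.mul_sum]
  exact Finset.sum_congr rfl fun i _ => Finset.sum_comm

lemma trace_one_kron_mul (σ : Matrix (Fin n) (Fin n) ℂ)
    (R : Matrix (Fin m × Fin n) (Fin m × Fin n) ℂ) :
    (kron 1 σ * R).trace = (σ * trA R).trace := by
  simp only [Matrix.trace, Matrix.diag_apply, Matrix.mul_apply, kron, trA, Matrix.of_apply,
    Fintype.sum_prod_type_right, Matrix.one_apply, ite_mul, one_mul, zero_mul,
    Finset.sum_ite_eq, Finset.mem_univ, if_true, Finset.mul_sum]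
  exact Finset.sum_congr rfl fun i _ => Finset.sum_comm

lemma Matrix.IsHermitian.kron {A : Matrix (Fin m) (Fin m) ℂ} {B : Matrix (Fin n) (Fin n) ℂ}
    (hA : A.IsHermitian) (hB : B.IsHermitian) : (kron A B).IsHermitian := by
  ext x y
  simp [_root_.kron, ← hA.apply x.1 y.1, ← hB.apply x.2 y.2]

lemma Matrix.IsHermitian.trB {R : Matrix (Fin m × Fin n) (Fin m × Fin n) ℂ}
    (hR : R.IsHermitian) : (trB R).IsHermitian := by
  ext i j
  simp [_root_.trB, hR.apply]

lemma Matrix.IsHermitian.trA {R : Matrix (Fin m × Fin n) (Fin m × Fin n) ℂ}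
    (hR : R.IsHermitian) : (trA R).IsHermitian := by
  ext i j
  simp [_root_.trA, hR.apply]

lemma kron_mem_QCouplings {ρA : Matrix (Fin m) (Fin m) ℂ} {ρB : Matrix (Fin n) (Fin n) ℂ}
    (hA : IsDensityMatrix ρA) (hB : IsDensityMatrix ρB) : kron ρA ρB ∈ QCouplings ρA ρB := by
  have hA' : ∑ i, ρA i i = 1 := hA.2
  have hB' : ∑ i, ρB i i = 1 := hB.2
  refine ⟨⟨hA.1.kronecker hB.1, ?_⟩, ?_, ?_⟩
  · exact (trace_kronecker ρA ρB).trans (by rw [hA.2, hB.2, one_mul])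
  · ext i j
    simp [trB, kron, ← Finset.mul_sum, hB']
  · ext i j
    simp [trA, kron, ← Finset.sum_mul, hA']

/-- The two marginals of a matrix together with its transport cost. -/
noncomputable def marginalsCost (C : Matrix (Fin m × Fin n) (Fin m × Fin n) ℂ) :
    Matrix (Fin m × Fin n) (Fin m × Fin n) ℂ →ₗ[ℝ]
      (Matrix (Fin m) (Fin m) ℂ × Matrix (Fin n) (Fin n) ℂ) × ℝ where
  toFun R := ((trB R, trA R), ((C * R).trace).re)
  map_add' R R' := by
    refine Prod.ext (Prod.ext ?_ ?_) ?_
    · ext; simp [trB, Finset.sum_add_distrib]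
    · ext; simp [trA, Finset.sum_add_distrib]
    · simp [Matrix.mul_add]
  map_smul' a R := by
    refine Prod.ext (Prod.ext ?_ ?_) ?_
    · ext; simp [trB, Finset.mul_sum]
    · ext; simp [trA, Finset.mul_sum]
    · simp

/-- Hermitian dual variables, obtained by symmetrization, mapped to the corresponding
dual constraint matrix. -/
noncomputable def dualMap (m n : ℕ) :
    (Matrix (Fin m) (Fin m) ℂ × Matrix (Fin n) (Fin n) ℂ) →ₗ[ℝ]
      Matrix (Fin m × Fin n) (Fin m × Fin n) ℂ where
  toFun p := kron (p.1 + p.1ᴴ) 1 + kron 1 (p.2 + p.2ᴴ)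
  map_add' p q := by ext x y; simp [kron]; ring
  map_smul' a p := by ext x y; simp [kron]; ring

lemma mem_range_dualMap {X : Matrix (Fin m × Fin n) (Fin m × Fin n) ℂ} :
    X ∈ LinearMap.range (dualMap m n) ↔
      ∃ (σA : Matrix (Fin m) (Fin m) ℂ) (σB : Matrix (Fin n) (Fin n) ℂ),
        σA.IsHermitian ∧ σB.IsHermitian ∧ X = kron σA 1 + kron 1 σB := by
  constructor
  · rintro ⟨p, rfl⟩
    exact ⟨_, _, isHermitian_add_transpose_self p.1, isHermitian_add_transpose_self p.2, rfl⟩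
  · rintro ⟨σA, σB, hA, hB, rfl⟩
    refine ⟨((2⁻¹ : ℝ) • σA, (2⁻¹ : ℝ) • σB), ?_⟩
    have half : ∀ {k : ℕ} (σ : Matrix (Fin k) (Fin k) ℂ), σ.IsHermitian →
        (2⁻¹ : ℝ) • σ + ((2⁻¹ : ℝ) • σ)ᴴ = σ := fun σ hσ => by
      rw [conjTranspose_smul, hσ.eq, star_trivial, ← add_smul]
      norm_num
    change kron (_ + _) 1 + kron 1 (_ + _) = _
    rw [half σA hA, half σB hB]

/-- Pairing a dual slack matrix with a coupling gives the duality gap. -/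
lemma re_trace_slack_mul {C R : Matrix (Fin m × Fin n) (Fin m × Fin n) ℂ}
    {ρA σA : Matrix (Fin m) (Fin m) ℂ} {ρB σB : Matrix (Fin n) (Fin n) ℂ}
    (hRA : trB R = ρA) (hRB : trA R = ρB) :
    (((C - kron σA 1 - kron 1 σB) * R).trace).re =
      ((C * R).trace).re - (((σA * ρA).trace).re + ((σB * ρB).trace).re) := by
  rw [Matrix.sub_mul, Matrix.sub_mul, trace_sub, trace_sub, trace_kron_one_mul,
    trace_one_kron_mul, hRA, hRB, Complex.sub_re, Complex.sub_re]
  ring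

variable {C : Matrix (Fin m × Fin n) (Fin m × Fin n) ℂ}
  {ρA : Matrix (Fin m) (Fin m) ℂ} {ρB : Matrix (Fin n) (Fin n) ℂ}

lemma QOT_le_of_mem_QCouplings {R : Matrix (Fin m × Fin n) (Fin m × Fin n) ℂ}
    (hR : R ∈ QCouplings ρA ρB) : QOT C ρA ρB ≤ ((C * R).trace).re := by
  refine csInf_le ?_ ⟨R, hR, rfl⟩
  have hcont : Continuous fun R : Matrix (Fin m × Fin n) (Fin m × Fin n) ℂ =>
      ((C * R).trace).re :=
    Complex.continuous_re.comp (continuous_const.matrix_mul continuous_id).matrix_trace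
  exact (isCompact_setOf_isDensityMatrix.image hcont).bddBelow.mono
    (Set.image_mono fun R hR => hR.1)

/-- Weak duality. -/
lemma dual_le_QOT (hA : IsDensityMatrix ρA) (hB : IsDensityMatrix ρB)
    {σA : Matrix (Fin m) (Fin m) ℂ} {σB : Matrix (Fin n) (Fin n) ℂ}
    (h : (C - kron σA 1 - kron 1 σB).PosSemidef) :
    ((σA * ρA).trace).re + ((σB * ρB).trace).re ≤ QOT C ρA ρB := by
  refine le_csInf ⟨_, _, kron_mem_QCouplings hA hB, rfl⟩ ?_
  rintro _ ⟨R, ⟨hR, hRA, hRB⟩, rfl⟩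
  have := h.re_trace_mul_nonneg hR.1
  rw [re_trace_slack_mul hRA hRB] at this
  linarith

/-- Every value below the primal optimum is attained by a feasible dual pair. -/
lemma exists_dual_eq_of_lt_QOT (hC : C.IsHermitian) (hA : IsDensityMatrix ρA)
    (hB : IsDensityMatrix ρB) {c : ℝ} (hc : c < QOT C ρA ρB) :
    ∃ (σA : Matrix (Fin m) (Fin m) ℂ) (σB : Matrix (Fin n) (Fin n) ℂ),
      σA.IsHermitian ∧ σB.IsHermitian ∧ (C - kron σA 1 - kron 1 σB).PosSemidef ∧
      c = ((σA * ρA).trace).re + ((σB * ρB).trace).re := by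
  have lcs : ∀ k : ℕ, LocallyConvexSpace ℝ (Matrix (Fin k) (Fin k) ℂ) := fun k =>
    inferInstanceAs (LocallyConvexSpace ℝ (Fin k → Fin k → ℂ))
  have := lcs m
  have := lcs n
  have hdisj : Disjoint (({ρA} ×ˢ {ρB}) ×ˢ Set.Iic c)
      (marginalsCost C '' {R | IsDensityMatrix R}) := by
    rw [Set.disjoint_left]
    rintro _ ⟨⟨h1, h2⟩, h3⟩ ⟨R, hR, rfl⟩
    exact (hc.trans_le (QOT_le_of_mem_QCouplings ⟨hR, h1, h2⟩)).not_ge h3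
  obtain ⟨f, u, v, hlow, huv, hhigh⟩ := geometric_hahn_banach_closed_compact
    (((convex_singleton ρA).prod (convex_singleton ρB)).prod (convex_Iic c))
    ((isClosed_singleton.prod isClosed_singleton).prod isClosed_Iic)
    (convex_setOf_isDensityMatrix.linear_image (marginalsCost C))
    (isCompact_setOf_isDensityMatrix.image (marginalsCost C).continuous_of_finiteDimensional)
    hdisj
  have hlt : ∀ R, IsDensityMatrix R →
      f ((ρA, ρB), c) < f ((trB R, trA R), ((C * R).trace).re) := fun R hR =>
    ((hlow ((ρA, ρB), c) (by simp)).trans huv).trans (hhigh _ ⟨R, hR, rfl⟩)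
  set l : ℝ := f (0, 1)
  let g : Matrix (Fin m) (Fin m) ℂ →ₗ[ℝ] ℝ :=
    f.toLinearMap ∘ₗ LinearMap.inl ℝ _ _ ∘ₗ LinearMap.inl ℝ _ _
  let h : Matrix (Fin n) (Fin n) ℂ →ₗ[ℝ] ℝ :=
    f.toLinearMap ∘ₗ LinearMap.inl ℝ _ _ ∘ₗ LinearMap.inr ℝ _ _
  have hf : ∀ X Y t, f ((X, Y), t) = g X + h Y + t * l := fun X Y t => by
    change _ = f ((X, 0), 0) + f ((0, Y), 0) + t * f (0, 1)
    rw [← smul_eq_mul, ← map_smul, ← map_add, ← map_add]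
    simp
  simp only [hf] at hlt
  have hl0 : 0 < l := by
    have hR0 := kron_mem_QCouplings hA hB
    have h1 := hlt _ hR0.1
    rw [hR0.2.1, hR0.2.2] at h1
    have h2 := hc.trans_le (QOT_le_of_mem_QCouplings (C := C) hR0)
    by_contra hneg
    nlinarith
  obtain ⟨σA, hσA, hgA⟩ := exists_isHermitian_forall_eq_re_trace_mul ((-l⁻¹) • g)
  obtain ⟨σB, hσB, hgB⟩ := exists_isHermitian_forall_eq_re_trace_mul ((-l⁻¹) • h)
  have hg : ∀ X : Matrix (Fin m) (Fin m) ℂ, X.IsHermitian →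
      g X = - l * ((σA * X).trace).re := fun X hX => by
    rw [← hgA X hX, LinearMap.smul_apply, smul_eq_mul]
    field_simp
  have hh : ∀ X : Matrix (Fin n) (Fin n) ℂ, X.IsHermitian →
      h X = - l * ((σB * X).trace).re := fun X hX => by
    rw [← hgB X hX, LinearMap.smul_apply, smul_eq_mul]
    field_simp
  set d : ℝ := ((σA * ρA).trace).re + ((σB * ρB).trace).re - c with hd
  have hσA' : (σA - (d : ℂ) • (1 : Matrix (Fin m) (Fin m) ℂ)).IsHermitian := by
    refine hσA.sub ?_
    rw [Matrix.IsHermitian, conjTranspose_smul, conjTranspose_one]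
    simp
  have hshift : ∀ X : Matrix (Fin m) (Fin m) ℂ, X.trace = 1 →
      (((σA - (d : ℂ) • (1 : Matrix (Fin m) (Fin m) ℂ)) * X).trace).re =
        ((σA * X).trace).re - d := fun X hX => by
    simp [Matrix.sub_mul, hX]
  refine ⟨σA - (d : ℂ) • 1, σB, hσA', hσB, ?_, ?_⟩
  · refine ((hC.sub (hσA'.kron isHermitian_one)).sub
      (isHermitian_one.kron hσB)).posSemidef_of_re_trace_mul_nonneg fun R hR => ?_
    have htr : (trB R).trace = 1 := by
      rw [← hR.2]
      simp [Matrix.trace, trB, Fintype.sum_prod_type]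
    rw [re_trace_slack_mul rfl rfl, hshift _ htr]
    have := hlt R hR
    rw [hg _ hA.1.isHermitian, hh _ hB.1.isHermitian, hg _ hR.1.isHermitian.trB,
      hh _ hR.1.isHermitian.trA] at this
    by_contra hneg
    nlinarith
  · rw [hshift _ hA.2, hd]
    ring

/-- The dual optimum is attained when both marginals are positive definite. -/
lemma exists_dual_eq_QOT (hC : C.IsHermitian) (hA : IsDensityMatrix ρA)
    (hB : IsDensityMatrix ρB) (hA' : ρA.PosDef) (hB' : ρB.PosDef) :
    ∃ (σA : Matrix (Fin m) (Fin m) ℂ) (σB : Matrix (Fin n) (Fin n) ℂ),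
      σA.IsHermitian ∧ σB.IsHermitian ∧ (C - kron σA 1 - kron 1 σB).PosSemidef ∧
      QOT C ρA ρB = ((σA * ρA).trace).re + ((σB * ρB).trace).re := by
  set R := kron ρA ρB
  have hR : R ∈ QCouplings ρA ρB := kron_mem_QCouplings hA hB
  have hRpos : R.PosDef := hA'.kronecker hB'
  set F : Matrix (Fin m × Fin n) (Fin m × Fin n) ℂ → ℝ := fun S => ((S * R).trace).re
  have hFcont : Continuous F :=
    Complex.continuous_re.comp (continuous_id.matrix_mul continuous_const).matrix_trace
  let K : Set (Matrix (Fin m × Fin n) (Fin m × Fin n) ℂ) :=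
    {S | S.PosSemidef ∧ F S ≤ F C - (QOT C ρA ρB - 1)} ∩
      (fun S => C - S) ⁻¹' (LinearMap.range (dualMap m n) : Set _)
  have hK : IsCompact K := by
    refine (hRpos.isCompact_setOf_posSemidef_re_trace_mul_le _).inter_right ?_
    exact (Submodule.closed_of_finiteDimensional _).preimage (continuous_const.sub continuous_id)
  have hmem : ∀ c, QOT C ρA ρB - 1 ≤ c → c < QOT C ρA ρB → ∃ S ∈ K, F S = F C - c := by
    intro c hc1 hc2
    obtain ⟨σA, σB, hσA, hσB, hpos, hval⟩ := exists_dual_eq_of_lt_QOT hC hA hB hc2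
    have hFS : F (C - kron σA 1 - kron 1 σB) = F C - c := by
      rw [hval]
      exact re_trace_slack_mul hR.2.1 hR.2.2
    refine ⟨_, ⟨⟨hpos, by rw [hFS]; linarith⟩, ?_⟩, hFS⟩
    exact mem_range_dualMap.mpr ⟨σA, σB, hσA, hσB, by dsimp only; rw [sub_sub, sub_sub_cancel]⟩
  obtain ⟨S₀, hS₀, -⟩ := hmem (QOT C ρA ρB - 1) le_rfl (by linarith)
  obtain ⟨S, ⟨⟨hSpos, -⟩, hSrange⟩, hmin⟩ :=
    hK.exists_isMinOn ⟨S₀, hS₀⟩ hFcont.continuousOn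
  obtain ⟨σA, σB, hσA, hσB, hS⟩ := mem_range_dualMap.mp hSrange
  obtain rfl : S = C - kron σA 1 - kron 1 σB := by
    rw [sub_sub, ← hS, sub_sub_cancel]
  refine ⟨σA, σB, hσA, hσB, hSpos, le_antisymm ?_ (dual_le_QOT hA hB hSpos)⟩
  have hval : F (C - kron σA 1 - kron 1 σB) = F C - _ := re_trace_slack_mul hR.2.1 hR.2.2
  refine le_of_forall_lt fun c hc => ?_
  obtain ⟨c', hc', hc''⟩ := exists_between (max_lt hc (sub_one_lt (QOT C ρA ρB)))
  obtain ⟨S', hS', hFS'⟩ := hmem c' ((le_max_right _ _).trans hc'.le) hc''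
  have := isMinOn_iff.mp hmin S' hS'
  linarith [le_max_left c (QOT C ρA ρB - 1)]

end Kronecker

/-- strong duality for the quantum optimal transport SDP, with
attainment of the supremum when both marginals are positive definite. -/
theorem qot_strong_duality (m n : ℕ)
    (C : Matrix (Fin m × Fin n) (Fin m × Fin n) ℂ) (hC : C.IsHermitian)
    (ρA : Matrix (Fin m) (Fin m) ℂ) (ρB : Matrix (Fin n) (Fin n) ℂ)
    (hA : IsDensityMatrix ρA) (hB : IsDensityMatrix ρB) :
    QOT C ρA ρB =
      sSup {r : ℝ |
        ∃ (σA : Matrix (Fin m) (Fin m) ℂ) (σB : Matrix (Fin n) (Fin n) ℂ),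
          σA.IsHermitian ∧ σB.IsHermitian ∧
          (C - kron σA 1 - kron 1 σB).PosSemidef ∧
          r = ((σA * ρA).trace).re + ((σB * ρB).trace).re} ∧
    (ρA.PosDef → ρB.PosDef →
      ∃ (σA : Matrix (Fin m) (Fin m) ℂ) (σB : Matrix (Fin n) (Fin n) ℂ),
        σA.IsHermitian ∧ σB.IsHermitian ∧
        (C - kron σA 1 - kron 1 σB).PosSemidef ∧
        QOT C ρA ρB = ((σA * ρA).trace).re + ((σB * ρB).trace).re) := by
  refine ⟨le_antisymm ?_ ?_, exists_dual_eq_QOT hC hA hB⟩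
  · refine le_of_forall_lt fun c hc => ?_
    obtain ⟨c', hc', hc''⟩ := exists_between hc
    refine hc'.trans_le (le_csSup ⟨QOT C ρA ρB, ?_⟩ (exists_dual_eq_of_lt_QOT hC hA hB hc''))
    rintro _ ⟨σA, σB, -, -, hpos, rfl⟩
    exact dual_le_QOT hA hB hpos
  · refine csSup_le ⟨_, exists_dual_eq_of_lt_QOT hC hA hB (sub_one_lt _)⟩ ?_
    rintro _ ⟨σA, σB, -, -, hpos, rfl⟩
    exact dual_le_QOT hA hB hpos
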